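/- arXiv:math-ph/9811005 — 3 statements merged into one kernel-verified Lean document; each statement's English description precedes it below -/
import Mathlib

section
/- Let A be a (possibly noncommutative) complex algebra with unit 1, let p, a ∈ A with p² = p, and let z ∈ ℂ (identified with z·1). Suppose that a − z and p·a·p − z are both invertible in A. Then p·(p·a·p − z)⁻¹ − (a − z)⁻¹ = (p·a·p − z)⁻¹ · p · a · (1 − p) · (a − z)⁻¹ − (1 − p) · (a − z)⁻¹. -/
/-- The resolvent comparison identity between an element `a` and its compression `p * a * p`
by an idempotent `p`, in a complex unital algebra. -/
theorem resolvent_compression_identity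
    {A : Type*} [Ring A] [Algebra ℂ A] (p a : A) (z : ℂ) (hp : p * p = p)
    (ha : IsUnit (a - algebraMap ℂ A z))
    (hpap : IsUnit (p * a * p - algebraMap ℂ A z)) :
    p * Ring.inverse (p * a * p - algebraMap ℂ A z) - Ring.inverse (a - algebraMap ℂ A z)
      = Ring.inverse (p * a * p - algebraMap ℂ A z) * p * a * (1 - p) *
          Ring.inverse (a - algebraMap ℂ A z)
        - (1 - p) * Ring.inverse (a - algebraMap ℂ A z) := by
  have hc : algebraMap ℂ A z * p = p * algebraMap ℂ A z := Algebra.commutes z p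
  have hR := Ring.inverse_mul_cancel _ hpap
  have hR' := Ring.mul_inverse_cancel _ hpap
  have hS := Ring.mul_inverse_cancel _ ha
  generalize Ring.inverse (p * a * p - algebraMap ℂ A z) = R at *
  generalize Ring.inverse (a - algebraMap ℂ A z) = S at *
  generalize algebraMap ℂ A z = c at *
  have hBp : (p * a * p - c) * p = p * a * p - p * c := by
    rw [sub_mul, mul_assoc (p * a), hp, hc]
  have hpB : p * (p * a * p - c) = p * a * p - p * c := by
    rw [mul_sub, ← mul_assoc, ← mul_assoc, hp]
  have hcomm : p * R = R * p := by
    calc p * R = R * (p * a * p - c) * (p * R) := by rw [hR, one_mul]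
      _ = R * ((p * a * p - c) * p) * R := by simp only [mul_assoc]
      _ = R * (p * (p * a * p - c)) * R := by rw [hBp, hpB]
      _ = R * p * ((p * a * p - c) * R) := by simp only [mul_assoc]
      _ = R * p := by rw [hR', mul_one]
  have h1 : R * p = R * (p * (a - c)) * S := by
    rw [← mul_assoc, mul_assoc (R * p), hS, mul_one]
  have h2 : p * S = R * (p * a * p - p * c) * S := by
    rw [← hBp, ← mul_assoc, hR, one_mul]
  have h3 : p * R - p * S = R * p * a * (1 - p) * S := by
    have h4 : p * R - p * S = R * (p * (a - c)) * S - R * (p * a * p - p * c) * S := by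
      rw [← h1, ← h2, hcomm]
    rw [h4]
    noncomm_ring
  rw [← h3]
  noncomm_ring
end

section
/- Let H be a complex Hilbert space, let A : H → H be a bounded self-adjoint operator, let P : H → H be an orthogonal projection (P² = P and P self-adjoint), and let ω be a nonzero real number. Then the operators A − iω·I and P∘A∘P − iω·I are invertible as bounded operators on H, and ‖P ∘ (P∘A∘P − iω·I)⁻¹ − (A − iω·I)⁻¹‖ ≤ (1 + ‖P∘A∘(I − P)‖/|ω|) · ‖(I − P) ∘ (A − iω·I)⁻¹‖, where ‖·‖ denotes the operator norm and I the identity operator. -/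
theorem aux_isUnit {H : Type*} [NormedAddCommGroup H] [InnerProductSpace ℂ H] [CompleteSpace H]
    (B : H →L[ℂ] H) (hB : IsSelfAdjoint B) (ω : ℝ) (hω : ω ≠ 0) :
    IsUnit (B - (Complex.I * ω) • (1 : H →L[ℂ] H)) := by
  by_contra h
  have hm : (Complex.I * ω) ∈ spectrum ℂ B := by
    rw [spectrum.mem_iff, Algebra.algebraMap_eq_smul_one]
    intro h'
    apply h
    rw [← neg_sub]
    exact h'.neg
  have := hB.im_eq_zero_of_mem_spectrum hm
  simp at this
  exact hω this

theorem aux_lower {H : Type*} [NormedAddCommGroup H] [InnerProductSpace ℂ H] [CompleteSpace H]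
    (B : H →L[ℂ] H) (hB : IsSelfAdjoint B) (ω : ℝ) (x : H) :
    |ω| * ‖x‖ ≤ ‖(B - (Complex.I * ω) • (1 : H →L[ℂ] H)) x‖ := by
  have h0 : (inner ℂ x (B x) : ℂ).im = 0 := by
    have h1 : (inner ℂ (B x) x : ℂ) = inner ℂ x (B x) := hB.isSymmetric x x
    have h2 := inner_conj_symm (𝕜 := ℂ) x (B x)
    rw [h1] at h2
    exact Complex.conj_eq_iff_im.mp h2
  have h1 : (inner ℂ x ((B - (Complex.I * ω) • (1 : H →L[ℂ] H)) x) : ℂ).im = -(ω * ‖x‖ ^ 2) := by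
    simp only [ContinuousLinearMap.sub_apply, ContinuousLinearMap.smul_apply,
      ContinuousLinearMap.one_apply, inner_sub_right, inner_smul_right, Complex.sub_im, h0,
      inner_self_eq_norm_sq_to_K]
    norm_cast
    simp [-Complex.ofReal_pow]
  have h2 := (Complex.abs_im_le_norm _).trans
    (norm_inner_le_norm (𝕜 := ℂ) x ((B - (Complex.I * ω) • (1 : H →L[ℂ] H)) x))
  rw [h1, abs_neg, abs_mul, abs_of_nonneg (sq_nonneg ‖x‖)] at h2
  rcases (norm_nonneg x).eq_or_lt with h | h
  · rw [← h]; simp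
  · refine le_of_mul_le_mul_left ?_ h
    linarith


/-- Quantitative resolvent estimate: for a bounded self-adjoint `A`, an orthogonal
projection `P` and nonzero real `ω`, both `A - iω` and `P∘A∘P - iω` are invertible and the
compressed resolvent differs from the resolvent by at most
`(1 + ‖P∘A∘(I-P)‖/|ω|) * ‖(I-P)∘(A-iω)⁻¹‖`. -/
theorem compressed_resolvent_estimate
    {H : Type*} [NormedAddCommGroup H] [InnerProductSpace ℂ H] [CompleteSpace H]
    (A P : H →L[ℂ] H) (hA : IsSelfAdjoint A)
    (hP : IsSelfAdjoint P) (hP2 : P * P = P)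
    (ω : ℝ) (hω : ω ≠ 0) :
    IsUnit (A - (Complex.I * ω) • (1 : H →L[ℂ] H)) ∧
    IsUnit (P * A * P - (Complex.I * ω) • (1 : H →L[ℂ] H)) ∧
    ‖P * Ring.inverse (P * A * P - (Complex.I * ω) • (1 : H →L[ℂ] H))
        - Ring.inverse (A - (Complex.I * ω) • (1 : H →L[ℂ] H))‖
      ≤ (1 + ‖P * A * (1 - P)‖ / |ω|) *
          ‖(1 - P) * Ring.inverse (A - (Complex.I * ω) • (1 : H →L[ℂ] H))‖ := by
  have hB : IsSelfAdjoint (P * A * P) := by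
    have := hA.conjugate P
    rwa [hP.star_eq] at this
  have hu := aux_isUnit A hA ω hω
  have hv := aux_isUnit _ hB ω hω
  refine ⟨hu, hv, ?_⟩
  have hlow := aux_lower _ hB ω
  have hTR := Ring.mul_inverse_cancel _ hu
  have hDS := Ring.mul_inverse_cancel _ hv
  have hSD := Ring.inverse_mul_cancel _ hv
  generalize Ring.inverse (A - (Complex.I * ω) • (1 : H →L[ℂ] H)) = R at *
  generalize Ring.inverse (P * A * P - (Complex.I * ω) • (1 : H →L[ℂ] H)) = S at *
  have hω' : 0 < |ω| := abs_pos.mpr hω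
  have hS : ‖S‖ ≤ 1 / |ω| := by
    refine S.opNorm_le_bound (by positivity) fun x => ?_
    have h := hlow (S x)
    rw [← ContinuousLinearMap.mul_apply, hDS, ContinuousLinearMap.one_apply] at h
    rw [one_div, ← div_eq_inv_mul, le_div_iff₀ hω']
    linarith
  have hPD : P * (P * A * P - (Complex.I * ω) • (1 : H →L[ℂ] H))
      = (P * A * P - (Complex.I * ω) • (1 : H →L[ℂ] H)) * P := by
    simp only [mul_sub, sub_mul, mul_smul_comm, smul_mul_assoc, mul_one, one_mul]
    rw [mul_assoc (P * A) P P, hP2, ← mul_assoc, ← mul_assoc, hP2]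
  have hkey : P * (A - (Complex.I * ω) • (1 : H →L[ℂ] H))
      - (P * A * P - (Complex.I * ω) • (1 : H →L[ℂ] H)) * P = P * A * (1 - P) * (1 - P) := by
    simp only [mul_sub, sub_mul, mul_smul_comm, smul_mul_assoc, mul_one, one_mul]
    rw [mul_assoc (P * A) P P, hP2]
    abel
  generalize A - (Complex.I * ω) • (1 : H →L[ℂ] H) = T at *
  generalize P * A * P - (Complex.I * ω) • (1 : H →L[ℂ] H) = D at *
  have hPS : P * S = S * P := by
    calc P * S = (S * D) * P * S := by rw [hSD, one_mul]
      _ = S * (D * P) * S := by simp only [mul_assoc]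
      _ = S * P * (D * S) := by rw [← hPD]; simp only [mul_assoc]
      _ = S * P := by rw [hDS, mul_one]
  have hmain : P * S - R = S * (P * A * (1 - P)) * ((1 - P) * R) - (1 - P) * R := by
    have e : S * (P * A * (1 - P)) * ((1 - P) * R) = S * (P * A * (1 - P) * (1 - P)) * R := by
      simp only [mul_assoc]
    have e2 : S * (P * T - D * P) * R = S * P * (T * R) - (S * D) * P * R := by
      simp only [mul_sub, sub_mul, mul_assoc]
    rw [e, ← hkey, e2, hTR, hSD, hPS]
    simp only [sub_mul, mul_one, one_mul]
    abel
  rw [hmain]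
  calc _ ≤ ‖S * (P * A * (1 - P)) * ((1 - P) * R)‖ + ‖(1 - P) * R‖ := norm_sub_le _ _
    _ ≤ ‖S‖ * ‖P * A * (1 - P)‖ * ‖(1 - P) * R‖ + ‖(1 - P) * R‖ := by
      gcongr
      exact (norm_mul_le _ _).trans (by gcongr; exact norm_mul_le _ _)
    _ ≤ 1 / |ω| * ‖P * A * (1 - P)‖ * ‖(1 - P) * R‖ + ‖(1 - P) * R‖ := by gcongr
    _ = _ := by ring
end

section
/- Let c, R > 0 and D ≥ 0 be real numbers, let ω ∈ ℝ, let m, k be natural numbers with m ≥ 1, and let λ : ℕ → ℝ be a sequence satisfying λ(n) ≥ n(n+1)/(c²R²) for all n ≥ m. Then ∑_{l=k+1}^∞ ∑_{n=m}^∞ (cR)² · (D + c·√(λ(n)))² / ( l(l+1) · (λ(n)² + ω²) ) ≤ ( (cR)² / √((k+1)·m) · ( c + c·R·D/√(m(m+1)) ) )². -/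
open scoped ENNReal

lemma tail_aux (m : ℕ) (hm : 1 ≤ m) :
    ∑' (n : {n : ℕ // m ≤ n}), ENNReal.ofReal (1 / ((n : ℝ) * ((n : ℝ) + 1)))
      ≤ ENNReal.ofReal (1 / (m : ℝ)) := by
  let e : ℕ ≃ {n : ℕ // m ≤ n} :=
    { toFun := fun i => ⟨m + i, Nat.le_add_right m i⟩
      invFun := fun n => n.1 - m
      left_inv := fun i => by simp
      right_inv := fun n => by
        apply Subtype.ext
        have := n.2
        simp only
        omega }
  rw [← e.tsum_eq]
  have hm' : (1 : ℝ) ≤ m := by exact_mod_cast hm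
  refine ENNReal.tsum_le_of_sum_range_le (fun N => ?_)
  have key : ∀ N : ℕ, ∑ i ∈ Finset.range N, (1 / (((m : ℝ) + i) * ((m : ℝ) + i + 1)))
      = 1 / (m : ℝ) - 1 / ((m : ℝ) + N) := by
    intro N
    induction N with
    | zero => simp
    | succ N ih =>
      rw [Finset.sum_range_succ, ih]
      have h1 : (m : ℝ) + N ≠ 0 := by positivity
      have h2 : (m : ℝ) + N + 1 ≠ 0 := by positivity
      have h3 : (m : ℝ) ≠ 0 := by positivity
      push_cast
      rw [← add_assoc]
      field_simp
      ring
  have h : ∀ i : ℕ, ((e i : ℕ) : ℝ) = (m : ℝ) + i := fun i => by simp [e]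
  simp only [h]
  rw [← ENNReal.ofReal_sum_of_nonneg (fun i _ => by positivity), key]
  apply ENNReal.ofReal_le_ofReal
  have : (0 : ℝ) ≤ 1 / ((m : ℝ) + N) := by positivity
  linarith

lemma term_aux (a c D ω x p q : ℝ) (ha : 0 < a) (hc : 0 < c) (hD : 0 ≤ D)
    (hq : 0 < q) (hqp : q ≤ p) (hx : p / a ^ 2 ≤ x) :
    (D + c * Real.sqrt x) ^ 2 / (x ^ 2 + ω ^ 2)
      ≤ a ^ 2 * (c + a * D / Real.sqrt q) ^ 2 * (1 / p) := by
  have hp : 0 < p := hq.trans_le hqp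
  have hx0 : 0 < x := lt_of_lt_of_le (by positivity) hx
  have hpx : p ≤ a ^ 2 * x := by
    rw [div_le_iff₀ (by positivity)] at hx
    linarith
  have hs : 0 < Real.sqrt x := Real.sqrt_pos.2 hx0
  have ht : 0 < Real.sqrt q := Real.sqrt_pos.2 hq
  have hts : Real.sqrt q ≤ a * Real.sqrt x := by
    rw [Real.sqrt_le_left (by positivity), mul_pow, Real.sq_sqrt hx0.le]
    linarith
  have h1 : D + c * Real.sqrt x ≤ Real.sqrt x * (c + a * D / Real.sqrt q) := by
    have : D ≤ Real.sqrt x * (a * D / Real.sqrt q) := by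
      rw [← mul_div_assoc, le_div_iff₀ ht]
      nlinarith
    linarith
  have h2 : (D + c * Real.sqrt x) ^ 2 ≤ x * (c + a * D / Real.sqrt q) ^ 2 := by
    calc _ ≤ (Real.sqrt x * (c + a * D / Real.sqrt q)) ^ 2 := by gcongr
      _ = _ := by rw [mul_pow, Real.sq_sqrt hx0.le]
  set B := (c + a * D / Real.sqrt q) ^ 2
  have hB : 0 ≤ B := by positivity
  rw [mul_one_div, div_le_div_iff₀ (by positivity) hp]
  calc _ ≤ (x * B) * (a ^ 2 * x) := by gcongr
    _ = a ^ 2 * B * x ^ 2 := by ring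
    _ ≤ _ := by gcongr; nlinarith [sq_nonneg ω]

/-- The quantitative double-series estimate from the proof of Theorem 2 (case `|m| ≥ 1`):
if `λ n ≥ n(n+1)/(c²R²)` for `n ≥ m`, then the double sum over `l ≥ k+1`, `n ≥ m` of
`(cR)²(D + c√(λ n))² / (l(l+1)(λ n² + ω²))` is bounded by
`((cR)²/√((k+1)m) · (c + cRD/√(m(m+1))))²`. -/
theorem double_series_resolvent_tail_estimate
    (c R D ω : ℝ) (hc : 0 < c) (hR : 0 < R) (hD : 0 ≤ D)
    (m k : ℕ) (hm : 1 ≤ m) (lam : ℕ → ℝ)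
    (hlam : ∀ n : ℕ, m ≤ n → ((n : ℝ) * ((n : ℝ) + 1)) / (c ^ 2 * R ^ 2) ≤ lam n) :
    ∑' (l : {l : ℕ // k + 1 ≤ l}), ∑' (n : {n : ℕ // m ≤ n}),
        ENNReal.ofReal ((c * R) ^ 2 * (D + c * Real.sqrt (lam n)) ^ 2 /
          (((l : ℝ) * ((l : ℝ) + 1)) * ((lam n) ^ 2 + ω ^ 2)))
      ≤ ENNReal.ofReal (((c * R) ^ 2 / Real.sqrt (((k : ℝ) + 1) * (m : ℝ)) *
          (c + c * R * D / Real.sqrt ((m : ℝ) * ((m : ℝ) + 1)))) ^ 2) := by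
  have hm' : (1 : ℝ) ≤ m := by exact_mod_cast hm
  set B := c + c * R * D / Real.sqrt ((m : ℝ) * ((m : ℝ) + 1)) with hB
  have hterm : ∀ (l : {l : ℕ // k + 1 ≤ l}) (n : {n : ℕ // m ≤ n}),
      ENNReal.ofReal ((c * R) ^ 2 * (D + c * Real.sqrt (lam n)) ^ 2 /
          (((l : ℝ) * ((l : ℝ) + 1)) * ((lam n) ^ 2 + ω ^ 2)))
      ≤ ENNReal.ofReal ((c * R) ^ 4 * B ^ 2) * ENNReal.ofReal (1 / ((l : ℝ) * ((l : ℝ) + 1)))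
        * ENNReal.ofReal (1 / ((n : ℝ) * ((n : ℝ) + 1))) := by
    intro l n
    have hn : (m : ℝ) ≤ (n : ℕ) := by exact_mod_cast n.2
    have h := term_aux (c * R) c D ω (lam n) ((n : ℝ) * ((n : ℝ) + 1)) ((m : ℝ) * ((m : ℝ) + 1))
      (by positivity) hc hD (by positivity) (by gcongr)
      (by rw [mul_pow]; exact hlam n n.2)
    rw [← hB] at h
    rw [← ENNReal.ofReal_mul (by positivity), ← ENNReal.ofReal_mul (by positivity)]
    apply ENNReal.ofReal_le_ofReal
    calc _ = ((c * R) ^ 2 * (1 / ((l : ℝ) * ((l : ℝ) + 1)))) *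
          ((D + c * Real.sqrt (lam n)) ^ 2 / ((lam n) ^ 2 + ω ^ 2)) := by
            rw [mul_one_div, div_mul_div_comm]
      _ ≤ ((c * R) ^ 2 * (1 / ((l : ℝ) * ((l : ℝ) + 1)))) *
          ((c * R) ^ 2 * B ^ 2 * (1 / ((n : ℝ) * ((n : ℝ) + 1)))) := by gcongr
      _ = _ := by ring
  refine (ENNReal.tsum_le_tsum fun l => ENNReal.tsum_le_tsum fun n => hterm l n).trans ?_
  simp only [ENNReal.tsum_mul_left, ENNReal.tsum_mul_right]
  have hk := tail_aux (k + 1) (by omega)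
  have hmm := tail_aux m hm
  refine (mul_le_mul' (mul_le_mul' le_rfl hk) hmm).trans ?_
  rw [← ENNReal.ofReal_mul (by positivity), ← ENNReal.ofReal_mul (by positivity)]
  apply ENNReal.ofReal_le_ofReal
  rw [mul_pow (_ / _) B, div_pow, Real.sq_sqrt (by positivity)]
  push_cast
  apply le_of_eq
  field_simp
end
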